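/- arXiv:2506.20778 — 2 statements merged into one kernel-verified Lean document; each statement's English description precedes it below -/
import Mathlib

section
/- For every prime p with p ≡ 3 mod 4, the set of positive integers d such that there exists a (12,16,96)-SIC consisting of d² vectors in F_{p²}^d is infinite. -/
open scoped BigOperators

noncomputable section

/-- A `(12,16,96)`-SIC of `d²` vectors in `F_{p²}^d = (GaloisField p 2)^d`, where
conjugation is the Frobenius `x ↦ x ^ p`: the vectors have norm `12`, pairwise
products of cross inner products equal `16`, they resolve `96` times the identity,
and they span the space. -/
def IsSIC (p : ℕ) [Fact p.Prime] (d : ℕ)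
    (x : Fin (d ^ 2) → Fin d → GaloisField p 2) : Prop :=
  (∀ m, (∑ k, x m k ^ p * x m k) = 12) ∧
  (∀ m n, m ≠ n →
    (∑ k, x m k ^ p * x n k) * (∑ k, x n k ^ p * x m k) = 16) ∧
  (∀ k l, (∑ m, x m k * x m l ^ p) = if k = l then 96 else 0) ∧
  Submodule.span (GaloisField p 2) (Set.range x) = ⊤

/-!
From a real Hadamard matrix `H` of order `8` one obtains the Hoggar lines by multiplying a single
entry of a single row of `H` by `1 + z`, with `z = -2 + 2i`, in all `8²` possible ways. That these
vectors form a SIC only uses `z + z̄ = -4`, `z̄ z = 8` and that the order of `H`, as a scalar, is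
`8`. Over `F_{p²}` it is therefore enough that the order is congruent to `8` modulo `p`, and
Sylvester's Hadamard matrices of order `2 ^ m` achieve this for infinitely many `m` by Euler's
theorem. The condition `p ≡ 3 mod 4` makes the Frobenius conjugation send `i` to `-i`.
-/

open Matrix
open scoped Kronecker

theorem isUnit_of_isHadamard {ι R : Type*} [Fintype ι] [DecidableEq ι] [CommRing R] [StarRing R]
    {H : Matrix ι ι R} (hH : H.IsHadamard) (hcard : IsUnit (Fintype.card ι : R)) : IsUnit H := by
  rw [isUnit_iff_isUnit_det]
  refine isUnit_of_mul_isUnit_left (y := star H.det) ?_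
  rw [hH.det_mul_star_det]
  exact hcard.pow _

/-- A Hadamard matrix over a star ring with self-adjoint entries: the analogue of a Hadamard
matrix with entries `±1`. -/
structure IsRealHadamard {ι R : Type*} [Fintype ι] [DecidableEq ι] [CommRing R] [StarRing R]
    (H : Matrix ι ι R) : Prop extends H.IsHadamard where
  isSelfAdjoint_apply (i j : ι) : IsSelfAdjoint (H i j)

namespace IsRealHadamard

variable {ι κ R : Type*} [Fintype ι] [DecidableEq ι] [Fintype κ] [DecidableEq κ]
  [CommRing R] [StarRing R] {H : Matrix ι ι R}

theorem apply_mul_apply_self (hH : IsRealHadamard H) (i j : ι) : H i j * H i j = 1 := by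
  simpa only [(hH.isSelfAdjoint_apply i j).star_eq] using Unitary.star_mul_self_of_mem
    (hH.apply_mem i j)

theorem row_dotProduct_row (hH : IsRealHadamard H) (i j : ι) :
    H i ⬝ᵥ H j = if i = j then (Fintype.card ι : R) else 0 := by
  simpa [mul_apply, dotProduct, one_apply, (hH.isSelfAdjoint_apply _ _).star_eq]
    using congr_fun₂ hH.mul_conjTranspose i j

theorem transpose (hH : IsRealHadamard H) : IsRealHadamard Hᵀ where
  toIsHadamard := hH.toIsHadamard.transpose
  isSelfAdjoint_apply i j := hH.isSelfAdjoint_apply j i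

theorem reindex (hH : IsRealHadamard H) (e : ι ≃ κ) : IsRealHadamard (Matrix.reindex e e H) where
  toIsHadamard := hH.toIsHadamard.reindex e e
  isSelfAdjoint_apply _ _ := hH.isSelfAdjoint_apply _ _

theorem kronecker (hH : IsRealHadamard H) {K : Matrix κ κ R} (hK : IsRealHadamard K) :
    IsRealHadamard (H ⊗ₖ K) where
  toIsHadamard := hH.toIsHadamard.kronecker hK.toIsHadamard
  isSelfAdjoint_apply _ _ := (hH.isSelfAdjoint_apply _ _).mul (hK.isSelfAdjoint_apply _ _)

end IsRealHadamard

section Sylvester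

variable (R : Type*) [CommRing R] [StarRing R]

theorem isRealHadamard_one {ι : Type*} [Unique ι] [DecidableEq ι] :
    IsRealHadamard (1 : Matrix ι ι R) where
  apply_mem i j := by
    obtain rfl := Subsingleton.elim i j
    simp
  mul_conjTranspose := by simp
  conjTranspose_mul := by simp
  isSelfAdjoint_apply i j := by
    obtain rfl := Subsingleton.elim i j
    simp

theorem isRealHadamard_two : IsRealHadamard (!![1, 1; 1, -1] : Matrix (Fin 2) (Fin 2) R) where
  apply_mem i j := by fin_cases i <;> fin_cases j <;> simp [Unitary.mem_iff]
  mul_conjTranspose := by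
    ext i j
    fin_cases i <;> fin_cases j <;> simp [mul_apply, one_add_one_eq_two]
  conjTranspose_mul := by
    ext i j
    fin_cases i <;> fin_cases j <;> simp [mul_apply, one_add_one_eq_two]
  isSelfAdjoint_apply i j := by fin_cases i <;> fin_cases j <;> simp [IsSelfAdjoint]

theorem exists_isRealHadamard_two_pow (m : ℕ) :
    ∃ H : Matrix (Fin (2 ^ m)) (Fin (2 ^ m)) R, IsRealHadamard H := by
  induction m with
  | zero => exact ⟨_, isRealHadamard_one R (ι := Fin 1)⟩
  | succ m ih =>
    obtain ⟨H, hH⟩ := ih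
    exact ⟨_, (hH.kronecker (isRealHadamard_two R)).reindex finProdFinEquiv⟩

end Sylvester

section HadamardFrame

variable {ι R : Type*} [DecidableEq ι] [CommRing R]

/-- The family of vectors indexed by `(a, b)` that perturbs row `b` of a matrix `H` by `z` times
its own entry at position `a`. For `H` a Hadamard matrix of order `8` and `z = -2 + 2i` these are
the Hoggar lines. -/
def hadamardFrame (H : Matrix ι ι R) (z : R) (ab : ι × ι) : ι → R :=
  H ab.2 * (1 + Pi.single ab.1 z)

variable [Fintype ι] {H : Matrix ι ι R} {z : R}

theorem span_range_hadamardFrame [Nonempty ι] (hH : IsUnit H) (hz : IsUnit (1 + z)) :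
    Submodule.span R (Set.range (hadamardFrame H z)) = ⊤ := by
  obtain ⟨a⟩ := ‹Nonempty ι›
  have isUnit_weights : IsUnit (1 + Pi.single a z : ι → R) := by
    refine Pi.isUnit_iff.2 fun k => ?_
    obtain rfl | hk := eq_or_ne k a
    · simpa using hz
    · simp [hk]
  have span_rows : Submodule.span R (Set.range (H * diagonal (1 + Pi.single a z)).row) = ⊤ := by
    rw [← range_vecMulLinear, LinearMap.range_eq_top]
    exact vecMul_surjective_iff_isUnit.2 (hH.mul (isUnit_diagonal.2 isUnit_weights))
  refine top_unique (span_rows.ge.trans (Submodule.span_mono ?_))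
  rintro _ ⟨b, rfl⟩
  exact ⟨(a, b), by ext k; simp [hadamardFrame, Matrix.row]⟩

variable [StarRing R]

theorem star_hadamardFrame_dotProduct (hH : IsRealHadamard H) (z : R) (a b a' b' : ι) :
    star (hadamardFrame H z (a, b)) ⬝ᵥ hadamardFrame H z (a', b') =
      (if b = b' then (Fintype.card ι : R) else 0) + star z * (H b a * H b' a) +
        z * (H b a' * H b' a') + if a = a' then star z * z * (H b a * H b' a) else 0 := by
  have star_row : star (H b) = H b := funext fun k => hH.isSelfAdjoint_apply b k
  have expand : star (hadamardFrame H z (a, b)) ⬝ᵥ hadamardFrame H z (a', b') =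
      (H b * H b') ⬝ᵥ
        (1 + Pi.single a (star z) + Pi.single a' z + Pi.single a (star z) * Pi.single a' z) := by
    refine Finset.sum_congr rfl fun k _ => ?_
    simp only [hadamardFrame, star_mul', star_add, star_one, star_row, ← Pi.single_star,
      Pi.mul_apply, Pi.add_apply, Pi.one_apply]
    ring
  have single_mul_single : (Pi.single a (star z) * Pi.single a' z : ι → R) =
      Pi.single a (if a = a' then star z * z else 0) := by
    ext k
    by_cases hk : k = a <;> simp [Pi.single_apply, hk]
  have rows : ∑ k, H b k * H b' k = if b = b' then (Fintype.card ι : R) else 0 :=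
    hH.row_dotProduct_row b b'
  rw [expand, single_mul_single]
  simp only [dotProduct_add, dotProduct_one, dotProduct_single, Pi.mul_apply, rows]
  split_ifs <;> ring

theorem star_hadamardFrame_dotProduct_self (hH : IsRealHadamard H) (z : R) (ab : ι × ι) :
    star (hadamardFrame H z ab) ⬝ᵥ hadamardFrame H z ab =
      Fintype.card ι + (z + star z) + star z * z := by
  rw [star_hadamardFrame_dotProduct hH]
  simp only [if_true, hH.apply_mul_apply_self]
  ring

theorem star_hadamardFrame_dotProduct_mul_swap (hH : IsRealHadamard H)
    (hcard : (Fintype.card ι : R) = 8) (htrace : z + star z = -4) (hnorm : star z * z = 8)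
    {ab ab' : ι × ι} (hne : ab ≠ ab') :
    (star (hadamardFrame H z ab) ⬝ᵥ hadamardFrame H z ab') *
      (star (hadamardFrame H z ab') ⬝ᵥ hadamardFrame H z ab) = 16 := by
  obtain ⟨a, b⟩ := ab
  obtain ⟨a', b'⟩ := ab'
  have sign_mul_self (k : ι) : (H b k * H b' k) * (H b k * H b' k) = 1 := by
    rw [mul_mul_mul_comm, hH.apply_mul_apply_self, hH.apply_mul_apply_self, one_mul]
  rw [star_hadamardFrame_dotProduct hH, star_hadamardFrame_dotProduct hH]
  simp only [mul_comm (H b' _)]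
  by_cases ha : a = a' <;> by_cases hb : b = b'
  · exact absurd (Prod.ext ha hb) hne
  · -- Both inner products are `(z + z̄ + z̄ z) u = 4 u` with `u = ±1`.
    subst ha
    simp only [if_true, if_neg hb, if_neg (Ne.symm hb), hnorm]
    linear_combination (z + star z + 12) * (H b a * H b' a) ^ 2 * htrace + 16 * sign_mul_self a
  · subst hb
    simp only [if_neg ha, if_neg (Ne.symm ha), if_true, hH.apply_mul_apply_self, hcard]
    linear_combination (z + star z + 12) * htrace
  · -- With `u, v = ±1` the product is `2 z̄ z + (z² + z̄²) u v`, and `z² + z̄² = 0`.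
    simp only [if_neg ha, if_neg (Ne.symm ha), if_neg hb, if_neg (Ne.symm hb)]
    have sq_add_sq : z ^ 2 + star z ^ 2 = 0 := by
      linear_combination (z + star z - 4) * htrace - 2 * hnorm
    linear_combination (H b a * H b' a) * (H b a' * H b' a') * sq_add_sq +
      ((H b a * H b' a) ^ 2 + (H b a' * H b' a') ^ 2) * hnorm +
      8 * sign_mul_self a + 8 * sign_mul_self a'

theorem sum_hadamardFrame_mul_star (hH : IsRealHadamard H) (z : R) (k l : ι) :
    ∑ ab, hadamardFrame H z ab k * star (hadamardFrame H z ab l) =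
      if k = l then (Fintype.card ι + (z + star z) + star z * z) * Fintype.card ι else 0 := by
  have factor (a b : ι) : hadamardFrame H z (a, b) k * star (hadamardFrame H z (a, b) l) =
      (1 + (Pi.single a z : ι → R) k) * star (1 + (Pi.single a z : ι → R) l) *
        (H b k * H b l) := by
    simp only [hadamardFrame, Pi.mul_apply, Pi.add_apply, Pi.one_apply, star_mul',
      (hH.isSelfAdjoint_apply b l).star_eq]
    ring
  have columns : ∑ b, H b k * H b l = if k = l then (Fintype.card ι : R) else 0 :=
    hH.transpose.row_dotProduct_row k l
  simp only [Fintype.sum_prod_type, factor, ← Finset.mul_sum, columns, ← Finset.sum_mul]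
  split_ifs with hkl
  · subst hkl
    have weight (a : ι) :
        (1 + (Pi.single a z : ι → R) k) * star (1 + (Pi.single a z : ι → R) k) =
          1 + if k = a then z + star z + star z * z else 0 := by
      obtain rfl | ha := eq_or_ne k a
      · simp only [Pi.single_eq_same, star_add, star_one, if_true]
        ring
      · simp [ha]
    simp only [weight, Finset.sum_add_distrib, Finset.sum_ite_eq, Finset.mem_univ, if_true,
      Finset.sum_const, Finset.card_univ, nsmul_one, add_assoc]
  · rw [mul_zero]

end HadamardFrame

section GaloisField

variable (p : ℕ) [Fact p.Prime]

/-- The Frobenius conjugation of `F_{p²}` as a star operation, for which `star x ⬝ᵥ y` is the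
sesquilinear form on `F_{p²}^d`. -/
local instance frobeniusStarRing : StarRing (GaloisField p 2) where
  star x := x ^ p
  star_involutive x := by
    change (x ^ p) ^ p = x
    have : Fintype (GaloisField p 2) := Fintype.ofFinite _
    rw [← pow_mul, ← sq, ← GaloisField.card p 2 two_ne_zero, Nat.card_eq_fintype_card,
      FiniteField.pow_card]
  star_mul x y := by rw [mul_comm, mul_pow]
  star_add x y := add_pow_char x y p

theorem exists_mul_self_eq_neg_one_and_star_eq_neg (hp4 : p % 4 = 3) :
    ∃ i : GaloisField p 2, i * i = -1 ∧ star i = -i := by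
  have : Fintype (GaloisField p 2) := Fintype.ofFinite _
  obtain ⟨i, hi⟩ : IsSquare (-1 : GaloisField p 2) := by
    rw [FiniteField.isSquare_neg_one_iff, ← Nat.card_eq_fintype_card,
      GaloisField.card p 2 two_ne_zero, Nat.pow_mod, hp4]
    norm_num
  obtain ⟨k, hk, hp⟩ : ∃ k, Odd k ∧ p = 2 * k + 1 :=
    ⟨p / 2, by rw [Nat.odd_iff]; omega, by omega⟩
  refine ⟨i, hi.symm, ?_⟩
  calc i ^ p = (i * i) ^ k * i := by rw [← sq, ← pow_mul, ← pow_succ, ← hp]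
    _ = -i := by rw [← hi, hk.neg_one_pow, neg_one_mul]

theorem exists_add_star_eq_neg_four_and_star_mul_eq_eight (hp4 : p % 4 = 3) :
    ∃ z : GaloisField p 2, z + star z = -4 ∧ star z * z = 8 := by
  obtain ⟨i, hi, hstar⟩ := exists_mul_self_eq_neg_one_and_star_eq_neg p hp4
  have hstar_z : star (-2 + 2 * i) = -2 - 2 * i := by
    simp [hstar, sub_eq_add_neg, mul_comm]
  refine ⟨-2 + 2 * i, ?_, ?_⟩ <;> rw [hstar_z]
  · ring
  · linear_combination -4 * hi

variable {p}

theorem exists_isSIC_of_isRealHadamard (hp4 : p % 4 = 3) {d : ℕ} (hd : d ≡ 8 [MOD p])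
    {H : Matrix (Fin d) (Fin d) (GaloisField p 2)} (hH : IsRealHadamard H) :
    ∃ x, IsSIC p d x := by
  obtain ⟨z, htrace, hnorm⟩ := exists_add_star_eq_neg_four_and_star_mul_eq_eight p hp4
  have two_ne : (2 : GaloisField p 2) ≠ 0 :=
    Ring.two_ne_zero (by rw [ringChar.eq (GaloisField p 2) p]; omega)
  have hcard : (Fintype.card (Fin d) : GaloisField p 2) = 8 := by
    rw [Fintype.card_fin]
    exact_mod_cast (CharP.natCast_eq_natCast (GaloisField p 2) p).2 hd
  have card_ne : (Fintype.card (Fin d) : GaloisField p 2) ≠ 0 := by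
    rw [hcard, show (8 : GaloisField p 2) = 2 ^ 3 by norm_num]
    exact pow_ne_zero 3 two_ne
  have one_add_z_ne : 1 + z ≠ 0 := by
    intro h
    obtain rfl : z = -1 := (neg_eq_of_add_eq_zero_right h).symm
    rw [star_neg, star_one] at htrace
    exact two_ne (by linear_combination htrace)
  have : Nonempty (Fin d) :=
    Fintype.card_pos_iff.1 (Nat.pos_of_ne_zero fun h => card_ne (by rw [h, Nat.cast_zero]))
  let index : Fin (d ^ 2) ≃ Fin d × Fin d := (finCongr (sq d)).trans finProdFinEquiv.symm
  refine ⟨hadamardFrame H z ∘ index, fun n => ?_, fun n n' hne => ?_, fun k l => ?_, ?_⟩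
  · refine (star_hadamardFrame_dotProduct_self hH z (index n)).trans ?_
    rw [hcard, htrace, hnorm]
    norm_num
  · exact star_hadamardFrame_dotProduct_mul_swap hH hcard htrace hnorm (index.injective.ne hne)
  · refine Eq.trans
      (index.sum_comp fun ab => hadamardFrame H z ab k * star (hadamardFrame H z ab l)) ?_
    rw [sum_hadamardFrame_mul_star hH, hcard, htrace, hnorm]
    norm_num
  · rw [index.surjective.range_comp]
    exact span_range_hadamardFrame
      (isUnit_of_isHadamard hH.toIsHadamard card_ne.isUnit) one_add_z_ne.isUnit

theorem exists_isSIC_two_pow (hp4 : p % 4 = 3) {m : ℕ} (hm : 2 ^ m ≡ 8 [MOD p]) :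
    ∃ x, IsSIC p (2 ^ m) x :=
  let ⟨_, hH⟩ := exists_isRealHadamard_two_pow (GaloisField p 2) m
  exists_isSIC_of_isRealHadamard hp4 hm hH

end GaloisField

theorem infinite_setOf_pow_modEq_pow {a n : ℕ} (hn : n ≠ 0) (ha : a.Coprime n) (k : ℕ) :
    {m | a ^ m ≡ a ^ k [MOD n]}.Infinite := by
  refine Set.infinite_of_injective_forall_mem (f := fun t => k + n.totient * t) ?_ fun t => ?_
  · exact (add_right_injective k).comp
      (mul_right_injective₀ (Nat.totient_pos.2 (Nat.pos_of_ne_zero hn)).ne')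
  · change a ^ (k + n.totient * t) ≡ a ^ k [MOD n]
    simpa [pow_add, pow_mul] using ((Nat.ModEq.pow_totient ha).pow t).mul_left (a ^ k)

theorem stmt_6 (p : ℕ) [Fact p.Prime] (hp4 : p % 4 = 3) :
    {d : ℕ | 0 < d ∧ ∃ x : Fin (d ^ 2) → Fin d → GaloisField p 2, IsSIC p d x}.Infinite := by
  have coprime_two : Nat.Coprime 2 p := Nat.coprime_two_left.2 (Nat.odd_iff.2 (by omega))
  have exponents : {m | 2 ^ m ≡ 2 ^ 3 [MOD p]}.Infinite :=
    infinite_setOf_pow_modEq_pow (NeZero.ne p) coprime_two 3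
  refine (exponents.image (Nat.pow_right_injective le_rfl).injOn).mono ?_
  rintro _ ⟨m, hm, rfl⟩
  exact ⟨by positivity, exists_isSIC_two_pow hp4 hm⟩
end
end

section
/- Let X = [d]×[d] and let {x_m}_{m∈X} be a SIC in L^d given by the construction. For each ω ∈ C_4 = {1,−1,i,−i}, let Γ_ω be the directed graph on vertex set C_4 × X with an edge (α,m) → (β,n) if and only if (α·x_m, β·x_n) = 4ω. Then a permutation π ∈ S_X lies in Aut_w({x_m}) if and only if there exist (i) a bijection f : C_4 × X → C_4 × X with f(C_4 × {m}) = C_4 × {π(m)} for every m ∈ X, (ii) ε ∈ {±1} with ε = 1 if char K ≠ 3, and (iii) γ ∈ {identity, conjugation}, such that for every ω ∈ C_4, f induces an isomorphism from Γ_ω to Γ_{ε·γ(ω)}, i.e., (α,m) → (β,n) in Γ_ω if and only if f(α,m) → f(β,n) in Γ_{ε·γ(ω)}. -/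
open scoped BigOperators

noncomputable section

/-- The sesquilinear form `(x, y) = ∑ₖ conj (x k) * y k` on `Fin d → L`. -/
def sesq {L : Type*} [Field L] (conj : L →+* L) {d : ℕ} (x y : Fin d → L) : L :=
  ∑ k, conj (x k) * y k

/-- The SIC vectors of the construction: `x i j = h j ∘ (𝟙 + z • e i)` with
`z = -2(1 + i0)`, i.e. the `k`-th entry is `H k j * (1 + z * δ_{k i})`. -/
def sicVec {K L : Type*} [Field K] [Field L] (φ : K →+* L) (i0 : L) {d : ℕ}
    (H : Matrix (Fin d) (Fin d) K) (i j : Fin d) : Fin d → L :=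
  fun k => φ (H k j) * (1 + (-2 * (1 + i0)) * (if k = i then 1 else 0))

/-- The SIC vectors indexed by `[d] × [d]`. -/
def sicFam {K L : Type*} [Field K] [Field L] (φ : K →+* L) (i0 : L) {d : ℕ}
    (H : Matrix (Fin d) (Fin d) K) : Fin d × Fin d → Fin d → L :=
  fun m => sicVec φ i0 H m.1 m.2

/-- `(π, σ)` induces a weak equivalence from the matrix `A` to `A'`. -/
def MatWeakEquiv {R : Type*} [CommRing R] {X : Type*} (π σ : Equiv.Perm X)
    (A A' : Matrix X X R) : Prop :=
  ∃ ε ε' : X → R, (∀ i, ε i = 1 ∨ ε i = -1) ∧ (∀ i, ε' i = 1 ∨ ε' i = -1) ∧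
    ∀ i j, A' (π i) (σ j) = ε i * ε' j * A i j

/-- `π` induces a strong equivalence from the matrix `A` to `A'`. -/
def MatStrongEquiv {R : Type*} [CommRing R] {X : Type*} (π : Equiv.Perm X)
    (A A' : Matrix X X R) : Prop :=
  ∃ ε : X → R, (∀ i, ε i = 1 ∨ ε i = -1) ∧
    ∀ i j, A' (π i) (π j) = ε i * ε j * A i j

/-- `π` induces a weak equivalence from the tuple `y` to the tuple `y'`:
there are an invertible linear map `U` preserving the sesquilinear form, scalars `c m`
with `conj (c m) * c m` constant, and a field automorphism `γ` of `L` commuting with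
conjugation, such that `y' (π m) = c m • γ (U (y m))` (with `γ` acting entrywise). -/
def SICWeakEquiv {L : Type*} [Field L] (conj : L →+* L) {d : ℕ} {X : Type*}
    (π : Equiv.Perm X) (y y' : X → Fin d → L) : Prop :=
  ∃ (U : (Fin d → L) ≃ₗ[L] (Fin d → L)) (c : X → L) (cc : L) (γ : L ≃+* L),
    (∀ v w : Fin d → L, sesq conj (U v) (U w) = sesq conj v w) ∧
    (∀ m, conj (c m) * c m = cc) ∧
    (∀ a : L, γ (conj a) = conj (γ a)) ∧
    (∀ m, y' (π m) = fun k => c m * γ (U (y m) k))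

/-- `π` induces a strong equivalence from the tuple `y` to the tuple `y'`
(as in `SICWeakEquiv`, but with `γ` the identity). -/
def SICStrongEquiv {L : Type*} [Field L] (conj : L →+* L) {d : ℕ} {X : Type*}
    (π : Equiv.Perm X) (y y' : X → Fin d → L) : Prop :=
  ∃ (U : (Fin d → L) ≃ₗ[L] (Fin d → L)) (c : X → L) (cc : L),
    (∀ v w : Fin d → L, sesq conj (U v) (U w) = sesq conj v w) ∧
    (∀ m, conj (c m) * c m = cc) ∧
    (∀ m, y' (π m) = fun k => c m * U (y m) k)

/-- The edge relation of the directed graph `Γ_ω`: there is an edge `(α, m) → (β, n)`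
iff `(α • x m, β • x n) = 4 ω`. -/
def sicEdge {L : Type*} [Field L] (conj : L →+* L) {d : ℕ} {X : Type*}
    (x : X → Fin d → L) (ω : L) (v w : L × X) : Prop :=
  sesq conj (fun k => v.1 * x v.2 k) (fun k => w.1 * x w.2 k) = 4 * ω

/-!
A weak equivalence is visible on Gram matrices: for a spanning tuple `x` and a tuple `x'` of nonzero
vectors, `π` induces one iff `(x'_{πm}, x'_{πn}) = conj (c m) * c n * γ (x_m, x_n)` for some nonzero
scalars `c m` of constant norm. Here all diagonal Gram entries are `12` and all others are `4` times
a fourth root of unity. Hence the ratios of the `c m` are fourth roots of unity, and the common norm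
`ε` is `1`, or possibly `-1` when `12 = 0`. So `c` may be replaced by fourth roots of unity `u`
together with the sign `ε`, and `(α, m) ↦ (γ α / u m, π m)` is the required map of graphs.
Conversely `u m` is read off from the image of `(1, m)`, and in characteristic `3` the sign `-1` is
the norm of `1 + i`.
-/

section FourthRoots

variable {L : Type*} [Field L] {conj : L →+* L} {i0 : L}

/-- The group `C₄ = {1, -1, i, -i}` of fourth roots of unity, as a subtype of `L`; it is spelled
out by its elements to agree with the vertex set of the graphs `Γ_ω`. -/
abbrev C4 (i0 : L) : Type _ := {a : L // a = 1 ∨ a = -1 ∨ a = i0 ∨ a = -i0}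

theorem pow_four_eq_one_iff (hi0 : i0 ^ 2 = -1) {a : L} :
    a ^ 4 = 1 ↔ a = 1 ∨ a = -1 ∨ a = i0 ∨ a = -i0 := by
  have factorization : a ^ 4 - 1 = (a - 1) * ((a + 1) * ((a - i0) * (a + i0))) := by
    linear_combination (a ^ 2 - 1) * hi0
  rw [← sub_eq_zero, factorization]
  simp only [mul_eq_zero, sub_eq_zero, add_eq_zero_iff_eq_neg]

theorem conj_mul_self_of_pow_four_eq_one (hi0 : i0 ^ 2 = -1) (hconji : conj i0 = -i0) {a : L}
    (ha : a ^ 4 = 1) : conj a * a = 1 := by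
  rcases (pow_four_eq_one_iff hi0).1 ha with rfl | rfl | rfl | rfl <;>
    simp [hconji, ← sq, hi0]

theorem ne_zero_of_pow_four_eq_one {a : L} (ha : a ^ 4 = 1) : a ≠ 0 := by
  rintro rfl
  simp at ha

theorem exists_eq_id_or_conj_eqOn_fourthRoots (hi0 : i0 ^ 2 = -1) (hconji : conj i0 = -i0)
    (γ : L ≃+* L) :
    ∃ g : L → L, (g = id ∨ g = fun a => conj a) ∧ ∀ ω, ω ^ 4 = 1 → g ω = γ ω := by
  have hγi : γ i0 = i0 ∨ γ i0 = -i0 := by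
    rw [← sq_eq_sq_iff_eq_or_eq_neg, ← map_pow, hi0, map_neg, map_one]
  simp only [pow_four_eq_one_iff hi0]
  rcases hγi with h | h
  · refine ⟨id, Or.inl rfl, ?_⟩
    rintro ω (rfl | rfl | rfl | rfl) <;> simp [h]
  · refine ⟨fun a => conj a, Or.inr rfl, ?_⟩
    rintro ω (rfl | rfl | rfl | rfl) <;> simp [h, hconji]

theorem exists_ringEquiv_of_eq_id_or_conj (hconj2 : ∀ a, conj (conj a) = a) {g : L → L}
    (hg : g = id ∨ g = fun a => conj a) :
    ∃ γ : L ≃+* L, (∀ a, γ a = g a) ∧ ∀ a, γ (conj a) = conj (γ a) := by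
  rcases hg with rfl | rfl
  · exact ⟨RingEquiv.refl L, fun _ => rfl, fun _ => rfl⟩
  · exact ⟨RingEquiv.ofRingHom conj conj (RingHom.ext hconj2) (RingHom.ext hconj2),
      fun _ => rfl, fun _ => rfl⟩

theorem exists_conj_mul_self_eq_sign (hi0 : i0 ^ 2 = -1) (hconji : conj i0 = -i0) {ε : L}
    (hε : ε = 1 ∨ ε = -1) (hε3 : (3 : L) ≠ 0 → ε = 1) : ∃ s, conj s * s = ε := by
  rcases hε with rfl | rfl
  · exact ⟨1, by simp⟩
  by_cases h3 : (3 : L) = 0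
  · refine ⟨1 + i0, ?_⟩
    rw [map_add, map_one, hconji]
    linear_combination h3 - hi0
  · exact ⟨1, by simp [hε3 h3]⟩

end FourthRoots

section Sesquilinear

variable {L : Type*} [Field L] (conj : L →+* L) {d : ℕ} {X : Type*}

theorem sesq_mul_mul (a b : L) (v w : Fin d → L) :
    sesq conj (fun k => a * v k) (fun k => b * w k) = conj a * b * sesq conj v w := by
  simp only [sesq, Finset.mul_sum, map_mul]
  exact Finset.sum_congr rfl fun k _ => by ring

theorem sesq_map {γ : L ≃+* L} (hγ : ∀ a, γ (conj a) = conj (γ a)) (v w : Fin d → L) :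
    sesq conj (fun k => γ (v k)) (fun k => γ (w k)) = γ (sesq conj v w) := by
  simp only [sesq, map_sum, map_mul, hγ]

/-- The form `sesq`, bundled as a semilinear map into linear functionals. -/
def sesqForm (d : ℕ) : (Fin d → L) →ₛₗ[conj] (Fin d → L) →ₗ[L] L :=
  LinearMap.mk₂'ₛₗ conj (RingHom.id L) (sesq conj)
    (fun v v' w => by simp [sesq, add_mul, Finset.sum_add_distrib])
    (fun a v w => by simp [sesq, mul_assoc, Finset.mul_sum])
    (fun v w w' => by simp [sesq, mul_add, Finset.sum_add_distrib])
    (fun a v w => by simp [sesq, mul_left_comm, Finset.mul_sum])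

theorem sesqForm_apply (v w : Fin d → L) : sesqForm conj d v w = sesq conj v w := rfl

theorem eq_of_forall_sesq_eq {v w : Fin d → L} (h : ∀ u, sesq conj u v = sesq conj u w) :
    v = w := by
  funext k
  simpa [sesq, Pi.single_apply, apply_ite conj] using h (Pi.single k 1)

theorem injective_of_sesq_eq {T : (Fin d → L) →ₗ[L] (Fin d → L)}
    (hT : ∀ v w, sesq conj (T v) (T w) = sesq conj v w) : Function.Injective T := by
  intro v w h
  refine eq_of_forall_sesq_eq conj fun u => ?_
  rw [← hT, h, hT]

theorem sesq_linearCombination_eq {x y : X → Fin d → L}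
    (hgram : ∀ m n, sesq conj (y m) (y n) = sesq conj (x m) (x n)) (a b : X →₀ L) :
    sesq conj (Finsupp.linearCombination L y a) (Finsupp.linearCombination L y b) =
      sesq conj (Finsupp.linearCombination L x a) (Finsupp.linearCombination L x b) := by
  simp only [← sesqForm_apply] at hgram ⊢
  induction a using Finsupp.induction_linear with
  | zero => simp
  | add a a' ha ha' => simp [ha, ha']
  | single m r =>
    induction b using Finsupp.induction_linear with
    | zero => simp
    | add b b' hb hb' => simp only [map_add, hb, hb']
    | single n s => simp [hgram]

theorem exists_linearEquiv_of_gram_eq {x y : X → Fin d → L}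
    (hspan : Submodule.span L (Set.range x) = ⊤)
    (hgram : ∀ m n, sesq conj (y m) (y n) = sesq conj (x m) (x n)) :
    ∃ U : (Fin d → L) ≃ₗ[L] (Fin d → L),
      (∀ v w, sesq conj (U v) (U w) = sesq conj v w) ∧ ∀ m, U (x m) = y m := by
  obtain ⟨R, hR⟩ := (Finsupp.linearCombination L x).exists_rightInverse_of_surjective
    (by rw [Finsupp.range_linearCombination, hspan])
  have hxR : ∀ v, Finsupp.linearCombination L x (R v) = v := LinearMap.congr_fun hR
  let T := Finsupp.linearCombination L y ∘ₗ R
  have hT : ∀ v w, sesq conj (T v) (T w) = sesq conj v w := fun v w => by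
    rw [LinearMap.comp_apply, LinearMap.comp_apply, sesq_linearCombination_eq conj hgram, hxR, hxR]
  let U := LinearEquiv.ofInjectiveEndo T (injective_of_sesq_eq conj hT)
  refine ⟨U, hT, fun m => eq_of_forall_sesq_eq conj fun u => ?_⟩
  -- `T` is onto, so it suffices to compare the products of `U (x m)` and `y m` with each `T v`.
  obtain ⟨v, rfl⟩ := U.surjective u
  calc sesq conj (T v) (T (x m))
      = sesq conj v (x m) := hT v (x m)
    _ = sesq conj (Finsupp.linearCombination L x (R v))
          (Finsupp.linearCombination L x (Finsupp.single m 1)) := by simp [hxR]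
    _ = sesq conj (Finsupp.linearCombination L y (R v))
          (Finsupp.linearCombination L y (Finsupp.single m 1)) :=
        (sesq_linearCombination_eq conj hgram _ _).symm
    _ = sesq conj (T v) (y m) := by simp [T]

end Sesquilinear

section GramScaling

variable {L : Type*} [Field L] {conj : L →+* L} {d : ℕ} {X : Type*}

/-- The Gram matrix of `x'`, reindexed along `π`, is obtained from that of `x` by applying `γ`
entrywise, rescaling the vectors by `c`, and multiplying by the overall factor `ε`. The factor is
separate because `-1`, in characteristic `3`, is not absorbed by fourth roots of unity `c m`. -/
def IsGramScaling (conj : L →+* L) (π : Equiv.Perm X) (ε : L) (c : X → L) (γ : L ≃+* L)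
    (x x' : X → Fin d → L) : Prop :=
  ∀ m n, sesq conj (x' (π m)) (x' (π n)) = ε * (conj (c m) * c n) * γ (sesq conj (x m) (x n))

variable {π : Equiv.Perm X} {ε : L} {c : X → L} {γ : L ≃+* L} {x x' : X → Fin d → L}

theorem SICWeakEquiv.exists_isGramScaling (h : SICWeakEquiv conj π x x') (hx' : ∀ m, x' m ≠ 0) :
    ∃ (c : X → L) (ε : L) (γ : L ≃+* L), (∀ m, c m ≠ 0) ∧ (∀ m, conj (c m) * c m = ε) ∧
      (∀ a, γ (conj a) = conj (γ a)) ∧ IsGramScaling conj π 1 c γ x x' := by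
  obtain ⟨U, c, ε, γ, hU, hcε, hγ, hxx'⟩ := h
  refine ⟨c, ε, γ, fun m hm => hx' (π m) ?_, hcε, hγ, fun m n => ?_⟩
  · rw [hxx', hm]
    funext k
    exact zero_mul _
  · rw [hxx', hxx', sesq_mul_mul, sesq_map conj hγ, hU, one_mul]

theorem IsGramScaling.sicWeakEquiv (hx : Submodule.span L (Set.range x) = ⊤) (hc : ∀ m, c m ≠ 0)
    (hcε : ∀ m, conj (c m) * c m = ε) (hγ : ∀ a, γ (conj a) = conj (γ a))
    (h : IsGramScaling conj π 1 c γ x x') : SICWeakEquiv conj π x x' := by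
  have hγ_symm : ∀ a, γ.symm (conj a) = conj (γ.symm a) := fun a => by
    rw [RingEquiv.symm_apply_eq, hγ, RingEquiv.apply_symm_apply]
  let y : X → Fin d → L := fun m k => γ.symm ((c m)⁻¹ * x' (π m) k)
  have hgram : ∀ m n, sesq conj (y m) (y n) = sesq conj (x m) (x n) := fun m n => by
    have hcm : conj (c m) ≠ 0 := (map_ne_zero conj).2 (hc m)
    rw [sesq_map conj hγ_symm, sesq_mul_mul, h, RingEquiv.symm_apply_eq, map_inv₀]
    field_simp [hc n]
  obtain ⟨U, hU, hUx⟩ := exists_linearEquiv_of_gram_eq conj hx hgram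
  refine ⟨U, c, ε, γ, hU, hcε, hγ, fun m => ?_⟩
  funext k
  rw [hUx, RingEquiv.apply_symm_apply, mul_inv_cancel_left₀ (hc m)]

theorem IsGramScaling.absorb_norm {s : L} (hs : conj s * s = ε)
    (h : IsGramScaling conj π ε c γ x x') : IsGramScaling conj π 1 (fun m => s * c m) γ x x' := by
  intro m n
  rw [h, ← hs, map_mul]
  ring

theorem IsGramScaling.div_const {b : L} (hb : b ≠ 0) (hbε : conj b * b = ε)
    (h : IsGramScaling conj π 1 c γ x x') : IsGramScaling conj π ε (fun m => c m / b) γ x x' := by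
  intro m n
  have hconjb : conj b ≠ 0 := (map_ne_zero conj).2 hb
  rw [h, ← hbε, map_div₀]
  field_simp

end GramScaling

section QuarticGram

variable {L : Type*} [Field L] {conj : L →+* L} {i0 : L} {d : ℕ} {X : Type*}

/-- The Gram matrix has all diagonal entries `12` and all other entries in `4 C₄`, as is the case
for the SICs of the construction. -/
structure HasQuarticGram (conj : L →+* L) (x : X → Fin d → L) : Prop where
  sesq_self : ∀ m, sesq conj (x m) (x m) = 12
  exists_sesq_eq : ∀ m n, m ≠ n → ∃ ω : L, ω ^ 4 = 1 ∧ sesq conj (x m) (x n) = 4 * ω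

theorem four_ne_zero_of_two_ne_zero (h2 : (2 : L) ≠ 0) : (4 : L) ≠ 0 := by
  rw [show (4 : L) = 2 * 2 by norm_num]
  exact mul_ne_zero h2 h2

variable {π : Equiv.Perm X} {ε : L} {c : X → L} {γ : L ≃+* L} {x x' : X → Fin d → L}

theorem HasQuarticGram.ne_zero [Nontrivial X] (h2 : (2 : L) ≠ 0) (hx : HasQuarticGram conj x)
    (m : X) : x m ≠ 0 := by
  intro hm
  obtain ⟨n, hn⟩ := exists_ne m
  obtain ⟨ω, hω, hmn⟩ := hx.exists_sesq_eq m n hn.symm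
  have hzero : 4 * ω = 0 := by simp [← hmn, sesq, hm]
  exact mul_ne_zero (four_ne_zero_of_two_ne_zero h2) (ne_zero_of_pow_four_eq_one hω) hzero

theorem HasQuarticGram.isGramScaling_of_subsingleton [Subsingleton X] (hx : HasQuarticGram conj x)
    (hx' : HasQuarticGram conj x') :
    IsGramScaling conj π 1 (fun _ => 1) (RingEquiv.refl L) x x' := by
  intro m n
  rw [Subsingleton.elim n m, hx.sesq_self, hx'.sesq_self]
  simp

theorem IsGramScaling.conj_mul_pow_four_eq_one (h2 : (2 : L) ≠ 0) (hx : HasQuarticGram conj x)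
    (hx' : HasQuarticGram conj x') (h : IsGramScaling conj π 1 c γ x x') {m n : X} (hmn : m ≠ n) :
    (conj (c m) * c n) ^ 4 = 1 := by
  obtain ⟨ω, hω, hxω⟩ := hx.exists_sesq_eq m n hmn
  obtain ⟨ω', hω', hxω'⟩ := hx'.exists_sesq_eq (π m) (π n) (π.injective.ne hmn)
  have hωω' : ω' = conj (c m) * c n * γ ω := by
    apply mul_left_cancel₀ (four_ne_zero_of_two_ne_zero h2)
    rw [← hxω', h, hxω, map_mul, map_ofNat]
    ring
  have hγω : γ ω ^ 4 = 1 := by rw [← map_pow, hω, map_one]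
  calc (conj (c m) * c n) ^ 4 = (conj (c m) * c n * γ ω) ^ 4 := by
        rw [mul_pow _ (γ ω), hγω, mul_one]
    _ = 1 := by rw [← hωω', hω']

theorem IsGramScaling.norm_eq_one [Nonempty X] (h2 : (2 : L) ≠ 0) (h3 : (3 : L) ≠ 0)
    (hx : HasQuarticGram conj x) (hx' : HasQuarticGram conj x')
    (hcε : ∀ m, conj (c m) * c m = ε) (h : IsGramScaling conj π 1 c γ x x') : ε = 1 := by
  obtain ⟨m⟩ := ‹Nonempty X›
  have hmm := h m m
  rw [hx.sesq_self, hx'.sesq_self, hcε, one_mul, map_ofNat] at hmm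
  have h12 : (12 : L) ≠ 0 := by
    rw [show (12 : L) = 4 * 3 by norm_num]
    exact mul_ne_zero (four_ne_zero_of_two_ne_zero h2) h3
  exact (right_eq_mul₀ h12).1 hmm

theorem IsGramScaling.norm_eq_one_or_neg_one [Nontrivial X] (h2 : (2 : L) ≠ 0)
    (hi0 : i0 ^ 2 = -1) (hconj2 : ∀ a, conj (conj a) = a) (hconji : conj i0 = -i0)
    (hx : HasQuarticGram conj x) (hx' : HasQuarticGram conj x')
    (hcε : ∀ m, conj (c m) * c m = ε) (h : IsGramScaling conj π 1 c γ x x') :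
    ε = 1 ∨ ε = -1 := by
  obtain ⟨m, n, hmn⟩ := exists_pair_ne X
  have hnorm := conj_mul_self_of_pow_four_eq_one hi0 hconji
    (h.conj_mul_pow_four_eq_one h2 hx hx' hmn)
  rw [← mul_self_eq_one_iff]
  calc ε * ε = conj (c m) * c m * (conj (c n) * c n) := by rw [hcε, hcε]
    _ = conj (conj (c m) * c n) * (conj (c m) * c n) := by rw [map_mul, hconj2]; ring
    _ = 1 := hnorm

theorem IsGramScaling.div_pow_four_eq_one (h2 : (2 : L) ≠ 0) (hx : HasQuarticGram conj x)
    (hx' : HasQuarticGram conj x') (hc : ∀ m, c m ≠ 0) (hcε : ∀ m, conj (c m) * c m = ε)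
    (hε : ε = 1 ∨ ε = -1) (h : IsGramScaling conj π 1 c γ x x') (m n : X) :
    (c n / c m) ^ 4 = 1 := by
  rcases eq_or_ne m n with rfl | hmn
  · rw [div_self (hc m), one_pow]
  have hdiv : c n / c m = conj (c m) * c n / ε := by
    have hcm : conj (c m) ≠ 0 := (map_ne_zero conj).2 (hc m)
    rw [← hcε m, mul_div_mul_left _ _ hcm]
  have hε4 : ε ^ 4 = 1 := by rcases hε with rfl | rfl <;> norm_num
  rw [hdiv, div_pow, h.conj_mul_pow_four_eq_one h2 hx hx' hmn, hε4, div_one]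

theorem sicWeakEquiv_iff_exists_fourthRoot_isGramScaling (h2 : (2 : L) ≠ 0)
    (hi0 : i0 ^ 2 = -1) (hconj2 : ∀ a, conj (conj a) = a) (hconji : conj i0 = -i0)
    (hx : HasQuarticGram conj x) (hx' : HasQuarticGram conj x')
    (hspan : Submodule.span L (Set.range x) = ⊤) :
    SICWeakEquiv conj π x x' ↔
      ∃ (ε : L) (γ : L ≃+* L), (ε = 1 ∨ ε = -1) ∧ ((3 : L) ≠ 0 → ε = 1) ∧
        (∀ a, γ (conj a) = conj (γ a)) ∧
        ∃ u : X → L, (∀ m, u m ^ 4 = 1) ∧ IsGramScaling conj π ε u γ x x' := by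
  constructor
  · intro h
    rcases subsingleton_or_nontrivial X with _ | _
    · exact ⟨1, RingEquiv.refl L, Or.inl rfl, fun _ => rfl, fun _ => rfl, fun _ => 1,
        fun _ => one_pow 4, hx.isGramScaling_of_subsingleton hx'⟩
    obtain ⟨c, ε, γ, hc, hcε, hγ, hscale⟩ := h.exists_isGramScaling (hx'.ne_zero h2)
    have hε : ε = 1 ∨ ε = -1 := hscale.norm_eq_one_or_neg_one h2 hi0 hconj2 hconji hx hx' hcε
    have hε3 : (3 : L) ≠ 0 → ε = 1 := fun h3 => hscale.norm_eq_one h2 h3 hx hx' hcε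
    obtain ⟨m₀⟩ := (inferInstance : Nonempty X)
    exact ⟨ε, γ, hε, hε3, hγ, fun m => c m / c m₀,
      hscale.div_pow_four_eq_one h2 hx hx' hc hcε hε m₀, hscale.div_const (hc m₀) (hcε m₀)⟩
  · rintro ⟨ε, γ, hε, hε3, hγ, u, hu, hscale⟩
    obtain ⟨s, hs⟩ := exists_conj_mul_self_eq_sign hi0 hconji hε hε3
    have hs0 : s ≠ 0 := by
      rintro rfl
      rcases hε with rfl | rfl <;> simp at hs
    refine (hscale.absorb_norm hs).sicWeakEquiv hspan (ε := ε)
      (fun m => mul_ne_zero hs0 (ne_zero_of_pow_four_eq_one (hu m))) (fun m => ?_) hγ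
    calc conj (s * u m) * (s * u m) = conj s * s * (conj (u m) * u m) := by rw [map_mul]; ring
      _ = ε := by rw [hs, conj_mul_self_of_pow_four_eq_one hi0 hconji (hu m), mul_one]

end QuarticGram

section Graph

variable {L : Type*} [Field L] {conj : L →+* L} {i0 : L} {d : ℕ} {X : Type*}
  {π : Equiv.Perm X} {ε : L} {γ : L ≃+* L} {x x' : X → Fin d → L}

theorem sicEdge_iff {ω α β : L} {m n : X} :
    sicEdge conj x ω (α, m) (β, n) ↔ conj α * β * sesq conj (x m) (x n) = 4 * ω := by
  rw [sicEdge, sesq_mul_mul]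

/-- The permutation `a ↦ γ a / b` of `C₄`, for a ring automorphism `γ` and `b ∈ C₄`. -/
def fourthRootPerm (hi0 : i0 ^ 2 = -1) (γ : L ≃+* L) {b : L} (hb : b ^ 4 = 1) : C4 i0 ≃ C4 i0 :=
  (γ.toEquiv.trans (Equiv.divRight₀ b (ne_zero_of_pow_four_eq_one hb))).subtypeEquiv fun a => by
    simp [← pow_four_eq_one_iff hi0, div_pow, hb, ← map_pow]

/-- The map `(α, m) ↦ (γ α / u m, π m)` on the vertices of the graphs `Γ_ω`. -/
def vertexEquiv (hi0 : i0 ^ 2 = -1) (π : Equiv.Perm X) (γ : L ≃+* L) {u : X → L}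
    (hu : ∀ m, u m ^ 4 = 1) : C4 i0 × X ≃ C4 i0 × X :=
  (Equiv.prodComm _ _).trans
    ((π.prodShear fun m => fourthRootPerm hi0 γ (hu m)).trans (Equiv.prodComm _ _))

theorem IsGramScaling.sicEdge_iff_sicEdge_div {u : X → L} (hε : ε ≠ 0)
    (hγ : ∀ a, γ (conj a) = conj (γ a)) (hu : ∀ m, u m ≠ 0)
    (h : IsGramScaling conj π ε u γ x x') (ω α β : L) (m n : X) :
    sicEdge conj x ω (α, m) (β, n) ↔
      sicEdge conj x' (ε * γ ω) (γ α / u m, π m) (γ β / u n, π n) := by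
  have hum : conj (u m) ≠ 0 := (map_ne_zero conj).2 (hu m)
  have hsesq : conj (γ α / u m) * (γ β / u n) * sesq conj (x' (π m)) (x' (π n)) =
      ε * γ (conj α * β * sesq conj (x m) (x n)) := by
    rw [h, map_div₀, map_mul, map_mul, hγ]
    field_simp [hu n]
  have hω : 4 * (ε * γ ω) = ε * γ (4 * ω) := by
    rw [map_mul, map_ofNat]
    ring
  rw [sicEdge_iff, sicEdge_iff, hsesq, hω, mul_right_inj' hε, γ.injective.eq_iff]

theorem isGramScaling_of_sicEdge (hi0 : i0 ^ 2 = -1) (hconji : conj i0 = -i0)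
    (hε3 : (3 : L) ≠ 0 → ε = 1) (hx : HasQuarticGram conj x) (hx' : HasQuarticGram conj x')
    {a : X → L} (ha : ∀ m, a m ^ 4 = 1)
    (hedge : ∀ ω, ω ^ 4 = 1 → ∀ m n, sicEdge conj x ω (1, m) (1, n) →
      sicEdge conj x' (ε * γ ω) (a m, π m) (a n, π n)) :
    IsGramScaling conj π ε (fun m => (a m)⁻¹) γ x x' := by
  have hnorm : ∀ m, conj (a m) * a m = 1 := fun m =>
    conj_mul_self_of_pow_four_eq_one hi0 hconji (ha m)
  have hsesq : ∀ m n, conj (a m) * a n * sesq conj (x' (π m)) (x' (π n)) =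
      ε * γ (sesq conj (x m) (x n)) := by
    intro m n
    rcases eq_or_ne m n with rfl | hmn
    · rw [hx.sesq_self, hx'.sesq_self, hnorm, map_ofNat, one_mul]
      by_cases h3 : (3 : L) = 0
      · linear_combination (4 - 4 * ε) * h3
      · rw [hε3 h3, one_mul]
    · obtain ⟨ω, hω, hxω⟩ := hx.exists_sesq_eq m n hmn
      rw [sicEdge_iff.1 (hedge ω hω m n (sicEdge_iff.2 (by simp [hxω]))), hxω, map_mul, map_ofNat]
      ring
  intro m n
  have ham : conj (a m) ≠ 0 := (map_ne_zero conj).2 (ne_zero_of_pow_four_eq_one (ha m))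
  have han : a n ≠ 0 := ne_zero_of_pow_four_eq_one (ha n)
  rw [mul_right_comm, ← hsesq, map_inv₀]
  field_simp

theorem exists_fourthRoot_isGramScaling_iff_exists_graphIso (hi0 : i0 ^ 2 = -1)
    (hconji : conj i0 = -i0) (hε : ε = 1 ∨ ε = -1) (hε3 : (3 : L) ≠ 0 → ε = 1)
    (hγ : ∀ a, γ (conj a) = conj (γ a)) (hx : HasQuarticGram conj x)
    (hx' : HasQuarticGram conj x') :
    (∃ u : X → L, (∀ m, u m ^ 4 = 1) ∧ IsGramScaling conj π ε u γ x x') ↔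
      ∃ f : C4 i0 × X ≃ C4 i0 × X, (∀ v, (f v).2 = π v.2) ∧
        ∀ ω, ω ^ 4 = 1 → ∀ v w, (sicEdge conj x ω (v.1.1, v.2) (w.1.1, w.2) ↔
          sicEdge conj x' (ε * γ ω) ((f v).1.1, (f v).2) ((f w).1.1, (f w).2)) := by
  constructor
  · rintro ⟨u, hu, hscale⟩
    have hε0 : ε ≠ 0 := by rcases hε with rfl | rfl <;> simp
    exact ⟨vertexEquiv hi0 π γ hu, fun _ => rfl, fun ω _ v w =>
      hscale.sicEdge_iff_sicEdge_div hε0 hγ (fun m => ne_zero_of_pow_four_eq_one (hu m)) ω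
        v.1.1 w.1.1 v.2 w.2⟩
  · rintro ⟨f, hf, hedge⟩
    let a : X → L := fun m => (f (⟨1, Or.inl rfl⟩, m)).1.1
    have ha : ∀ m, a m ^ 4 = 1 := fun m => (pow_four_eq_one_iff hi0).2 (f _).1.2
    refine ⟨fun m => (a m)⁻¹, fun m => by rw [inv_pow, ha, inv_one],
      isGramScaling_of_sicEdge hi0 hconji hε3 hx hx' ha fun ω hω m n h => ?_⟩
    simpa only [hf] using (hedge ω hω (⟨1, Or.inl rfl⟩, m) (⟨1, Or.inl rfl⟩, n)).1 h

end Graph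

theorem stmt_12_general {L : Type*} [Field L] (h2 : (2 : L) ≠ 0) {i0 : L} (hi0 : i0 ^ 2 = -1)
    {conj : L →+* L} (hconj2 : ∀ a, conj (conj a) = a) (hconji : conj i0 = -i0)
    {d : ℕ} {X : Type*} {x x' : X → Fin d → L}
    (hx : HasQuarticGram conj x) (hx' : HasQuarticGram conj x')
    (hspan : Submodule.span L (Set.range x) = ⊤) (π : Equiv.Perm X) :
    SICWeakEquiv conj π x x' ↔
      ∃ f : C4 i0 × X ≃ C4 i0 × X, (∀ v, (f v).2 = π v.2) ∧
        ∃ ε : L, (ε = 1 ∨ ε = -1) ∧ ((3 : L) ≠ 0 → ε = 1) ∧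
        ∃ g : L → L, (g = id ∨ g = fun a => conj a) ∧
          ∀ ω : L, (ω = 1 ∨ ω = -1 ∨ ω = i0 ∨ ω = -i0) → ∀ v w,
            (sicEdge conj x ω (v.1.1, v.2) (w.1.1, w.2) ↔
              sicEdge conj x' (ε * g ω) ((f v).1.1, (f v).2) ((f w).1.1, (f w).2)) := by
  simp only [← pow_four_eq_one_iff hi0]
  rw [sicWeakEquiv_iff_exists_fourthRoot_isGramScaling h2 hi0 hconj2 hconji hx hx' hspan]
  constructor
  · rintro ⟨ε, γ, hε, hε3, hγ, hscale⟩
    obtain ⟨f, hf, hedge⟩ := (exists_fourthRoot_isGramScaling_iff_exists_graphIso hi0 hconji hε hε3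
      hγ hx hx').1 hscale
    obtain ⟨g, hg, hgγ⟩ := exists_eq_id_or_conj_eqOn_fourthRoots hi0 hconji γ
    exact ⟨f, hf, ε, hε, hε3, g, hg, fun ω hω => hgγ ω hω ▸ hedge ω hω⟩
  · rintro ⟨f, hf, ε, hε, hε3, g, hg, hedge⟩
    obtain ⟨γ, hγg, hγ⟩ := exists_ringEquiv_of_eq_id_or_conj hconj2 hg
    exact ⟨ε, γ, hε, hε3, hγ, (exists_fourthRoot_isGramScaling_iff_exists_graphIso hi0 hconji hε
      hε3 hγ hx hx').2 ⟨f, hf, fun ω hω => hγg ω ▸ hedge ω hω⟩⟩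

section MatrixIdentities

variable {ι : Type*} [Fintype ι] [DecidableEq ι]

theorem sum_map_mul_map_of_mul_eq_smul_one {R S : Type*} [Semiring R] [Semiring S] (φ : R →+* S)
    {A B : Matrix ι ι R} {r : R} (h : A * B = r • (1 : Matrix ι ι R)) (i j : ι) :
    ∑ t, φ (A i t) * φ (B t j) = if i = j then φ r else 0 := by
  have hij := congrArg φ (congrFun (congrFun h i) j)
  simpa [Matrix.mul_apply, Matrix.one_apply, apply_ite φ] using hij

theorem mul_eq_smul_one_symm {K : Type*} [Field K] {A B : Matrix ι ι K} {r : K} (hr : r ≠ 0)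
    (h : A * B = r • (1 : Matrix ι ι K)) : B * A = r • (1 : Matrix ι ι K) := by
  have hleft : (r⁻¹ • A) * B = 1 := by rw [Matrix.smul_mul, h, inv_smul_smul₀ hr]
  have hright : r⁻¹ • (B * A) = 1 := by rw [← Matrix.mul_smul, mul_eq_one_comm.1 hleft]
  rw [← hright, smul_inv_smul₀ hr]

end MatrixIdentities

section Construction

variable {K L : Type*} [Field K] [Field L] {φ : K →+* L} {i0 : L} {conj : L →+* L} {d : ℕ}
  {H : Matrix (Fin d) (Fin d) K}

theorem sesq_sicFam (hi0 : i0 ^ 2 = -1) (hconjφ : ∀ a, conj (φ a) = φ a) (hconji : conj i0 = -i0)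
    (hH : H.transpose * H = (8 : K) • (1 : Matrix (Fin d) (Fin d) K)) (m n : Fin d × Fin d) :
    sesq conj (sicFam φ i0 H m) (sicFam φ i0 H n) =
      (if m.2 = n.2 then 8 else 0) + -2 * (1 - i0) * (φ (H m.1 m.2) * φ (H m.1 n.2))
      + -2 * (1 + i0) * (φ (H n.1 m.2) * φ (H n.1 n.2))
      + (if m.1 = n.1 then 8 * (φ (H m.1 m.2) * φ (H m.1 n.2)) else 0) := by
  have hcol := sum_map_mul_map_of_mul_eq_smul_one φ hH m.2 n.2
  simp only [Matrix.transpose_apply, map_ofNat] at hcol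
  -- The coefficient `8` in the last summand is `conj z * z` for `z = -2 * (1 + i0)`.
  have hterm : ∀ t, conj (sicFam φ i0 H m t) * sicFam φ i0 H n t =
      φ (H t m.2) * φ (H t n.2)
      + (if t = m.1 then -2 * (1 - i0) * (φ (H t m.2) * φ (H t n.2)) else 0)
      + (if t = n.1 then -2 * (1 + i0) * (φ (H t m.2) * φ (H t n.2)) else 0)
      + (if t = m.1 then (if t = n.1 then 8 * (φ (H t m.2) * φ (H t n.2)) else 0) else 0) := by
    intro t
    simp only [sicFam, sicVec, map_mul, map_add, map_neg, map_one, map_ofNat, hconjφ, hconji]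
    split_ifs <;> simp only [map_one, map_zero]
    · linear_combination (-4 * φ (H t m.2) * φ (H t n.2)) * hi0
    all_goals ring
  simp only [sesq, hterm, Finset.sum_add_distrib, hcol, Finset.sum_ite_eq', Finset.mem_univ,
    if_true]

theorem hasQuarticGram_sicFam (hi0 : i0 ^ 2 = -1) (hconjφ : ∀ a, conj (φ a) = φ a)
    (hconji : conj i0 = -i0) (hH1 : ∀ i j, H i j ^ 2 = 1)
    (hH : H.transpose * H = (8 : K) • (1 : Matrix (Fin d) (Fin d) K)) :
    HasQuarticGram conj (sicFam φ i0 H) := by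
  have hsq : ∀ i j, φ (H i j) * φ (H i j) = 1 := fun i j => by
    rw [← map_mul, ← sq, hH1, map_one]
  have hsign : ∀ i j l, φ (H i j) * φ (H i l) = 1 ∨ φ (H i j) * φ (H i l) = -1 := fun i j l => by
    rw [← mul_self_eq_one_iff, mul_mul_mul_comm, hsq, hsq, one_mul]
  refine ⟨fun m => ?_, ?_⟩
  · rw [sesq_sicFam hi0 hconjφ hconji hH, if_pos rfl, if_pos rfl, hsq]
    ring
  rintro ⟨i, j⟩ ⟨k, l⟩ hmn
  simp only [pow_four_eq_one_iff hi0, sesq_sicFam hi0 hconjφ hconji hH]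
  rcases eq_or_ne j l with rfl | hjl
  · have hik : i ≠ k := by
      rintro rfl
      exact hmn rfl
    refine ⟨1, Or.inl rfl, ?_⟩
    rw [if_pos rfl, if_neg hik, hsq, hsq]
    ring
  rw [if_neg hjl]
  rcases eq_or_ne i k with rfl | hik
  · refine ⟨φ (H i j) * φ (H i l), (hsign i j l).imp_right Or.inl, ?_⟩
    rw [if_pos rfl]
    ring
  · rw [if_neg hik]
    rcases hsign i j l with hi | hi <;> rcases hsign k j l with hk | hk <;> rw [hi, hk]
    · exact ⟨-1, by simp, by ring⟩
    · exact ⟨i0, by simp, by ring⟩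
    · exact ⟨-i0, by simp, by ring⟩
    · exact ⟨1, by simp, by ring⟩

theorem one_add_z_ne_zero (h5 : (5 : L) ≠ 0) (hi0 : i0 ^ 2 = -1) : 1 + -2 * (1 + i0) ≠ 0 := by
  intro h
  apply h5
  linear_combination (-1 + 2 * i0) * h + 4 * hi0

theorem single_eq_smul_sum_sicFam (h2 : (2 : K) ≠ 0) (h5 : (5 : K) ≠ 0) (hi0 : i0 ^ 2 = -1)
    (hH : H.transpose * H = (8 : K) • (1 : Matrix (Fin d) (Fin d) K)) (k : Fin d) :
    Pi.single k 1 =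
      (8 * (1 + -2 * (1 + i0)))⁻¹ • ∑ j, φ (H k j) • sicFam φ i0 H (k, j) := by
  have h8 : (8 : K) ≠ 0 := by
    rw [show (8 : K) = 2 ^ 3 by norm_num]
    exact pow_ne_zero 3 h2
  have h8L : (8 : L) ≠ 0 := by rwa [← map_ofNat φ 8, map_ne_zero]
  have h5L : (5 : L) ≠ 0 := by rwa [← map_ofNat φ 5, map_ne_zero]
  have hrow := sum_map_mul_map_of_mul_eq_smul_one φ (mul_eq_smul_one_symm h8 hH) k
  simp only [Matrix.transpose_apply, map_ofNat] at hrow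
  funext t
  simp only [Pi.smul_apply, Finset.sum_apply, smul_eq_mul, sicFam, sicVec, ← mul_assoc,
    ← Finset.sum_mul, hrow]
  rcases eq_or_ne t k with rfl | htk
  · have hz := one_add_z_ne_zero h5L hi0
    simp only [Pi.single_eq_same, if_true, mul_one]
    rw [mul_assoc, inv_mul_cancel₀ (mul_ne_zero h8L hz)]
  · simp [htk, htk.symm]

theorem span_range_sicFam (h2 : (2 : K) ≠ 0) (h5 : (5 : K) ≠ 0) (hi0 : i0 ^ 2 = -1)
    (hH : H.transpose * H = (8 : K) • (1 : Matrix (Fin d) (Fin d) K)) :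
    Submodule.span L (Set.range (sicFam φ i0 H)) = ⊤ := by
  rw [eq_top_iff, ← (Pi.basisFun L (Fin d)).span_eq, Submodule.span_le]
  rintro _ ⟨k, rfl⟩
  rw [Pi.basisFun_apply, single_eq_smul_sum_sicFam (φ := φ) h2 h5 hi0 hH]
  exact Submodule.smul_mem _ _ <| Submodule.sum_mem _ fun j _ => Submodule.smul_mem _ _ <|
    Submodule.subset_span ⟨(k, j), rfl⟩

end Construction

theorem stmt_12 {K L : Type*} [Field K] [Field L]
    (hK2 : (2 : K) ≠ 0) (hKroot : ∀ a : K, a ^ 2 ≠ -1)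
    (φ : K →+* L) (i0 : L) (hi0 : i0 ^ 2 = -1)
    (conj : L →+* L) (hconj2 : ∀ x : L, conj (conj x) = x)
    (hconjφ : ∀ a : K, conj (φ a) = φ a) (hconji : conj i0 = -i0)
    (hLgen : ∀ x : L, ∃ a b : K, x = φ a + φ b * i0)
    {d : ℕ} (H : Matrix (Fin d) (Fin d) K)
    (hH1 : ∀ i j, H i j ^ 2 = 1)
    (hH2 : H.transpose * H = (d : K) • (1 : Matrix (Fin d) (Fin d) K))
    (hd8 : (d : K) = 8)
    (π : Equiv.Perm (Fin d × Fin d)) :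
    SICWeakEquiv conj π (sicFam φ i0 H) (sicFam φ i0 H) ↔
    ∃ f : ({a : L // a = 1 ∨ a = -1 ∨ a = i0 ∨ a = -i0} × (Fin d × Fin d)) ≃
        ({a : L // a = 1 ∨ a = -1 ∨ a = i0 ∨ a = -i0} × (Fin d × Fin d)),
      (∀ v, (f v).2 = π v.2) ∧
      ∃ ε : L, (ε = 1 ∨ ε = -1) ∧ ((3 : K) ≠ 0 → ε = 1) ∧
      ∃ g : L → L, (g = id ∨ g = fun a => conj a) ∧
        ∀ ω : L, (ω = 1 ∨ ω = -1 ∨ ω = i0 ∨ ω = -i0) → ∀ v w,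
          (sicEdge conj (sicFam φ i0 H) ω (v.1.1, v.2) (w.1.1, w.2) ↔
            sicEdge conj (sicFam φ i0 H) (ε * g ω)
              ((f v).1.1, (f v).2) ((f w).1.1, (f w).2)) := by
  rw [hd8] at hH2
  have h2 : (2 : L) ≠ 0 := by rwa [← map_ofNat φ 2, map_ne_zero]
  have h3 : (3 : L) = 0 ↔ (3 : K) = 0 := by rw [← map_ofNat φ 3, map_eq_zero]
  have h5 : (5 : K) ≠ 0 := fun h => hKroot 2 (by linear_combination h)
  have hx := hasQuarticGram_sicFam hi0 hconjφ hconji hH1 hH2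
  have hspan := span_range_sicFam (φ := φ) hK2 h5 hi0 hH2
  simpa only [ne_eq, h3] using stmt_12_general h2 hi0 hconj2 hconji hx hx hspan π
end
end
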